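/- arXiv:math/0606173 — 3 statements merged into one kernel-verified Lean document; each statement's English description precedes it below -/
import Mathlib

section
/- Let a and t be real numbers with a > 0 and |t| < a. Then ∑_{n=1}^∞ ζ(n+1, a) t^{n+1}/(n+1) = t·ψ(a) + log Γ(a−t) − log Γ(a). -/
/-!
Write `L = log ∘ Γ`, so `L' = ψ` on the positive reals. Expanding `ζ(n+2, a)` turns the series into
the double series of the terms `(t/(k+a))^(n+2)/(n+2)`. Summed over `n` first, row `k` gives
`-log (1 - t/(k+a)) - t/(k+a)`, and by `L (x+1) = L x + log x` and `ψ (x+1) = ψ x + 1/x` the rows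
telescope: the sum of the first `N` of them is
`t ψ(a) + L (a-t) - L a + (L (a+N) - L (a+N-t) - t ψ(a+N))` (`sum_range_row`).
Since `L` is convex, the remainder lies between `t (ψ(a+N-t) - ψ(a+N))` and `0`, and it tends to `0`
because `log (x-1) ≤ ψ x ≤ log x`, again by convexity (`tendsto_remainder`).

The interchange of summations is justified by absolute convergence, which is the same computation
with `|t|` in place of `t`: there all terms are nonnegative, so the convergence of the partial sums
of the rows already gives summability of the double family (`summable_terms`).
-/

/-- The Hurwitz zeta value `ζ(s, a) = ∑_{k=0}^∞ (k+a)^{-s}` (for real `s > 1`, `a > 0`). -/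
noncomputable def hurwitzZetaSum (s a : ℝ) : ℝ := ∑' k : ℕ, ((k : ℝ) + a) ^ (-s)

/-- The digamma function `ψ(x) = Γ'(x)/Γ(x)`. -/
noncomputable def digamma (x : ℝ) : ℝ := deriv Real.Gamma x / Real.Gamma x

open Filter Topology

lemma hasDerivAt_log_Gamma {x : ℝ} (hx : 0 < x) :
    HasDerivAt (Real.log ∘ Real.Gamma) (digamma x) x := by
  have hd : DifferentiableAt ℝ Real.Gamma x :=
    Real.differentiableAt_Gamma fun m => by
      have : (0 : ℝ) ≤ m := m.cast_nonneg
      linarith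
  exact hd.hasDerivAt.log (Real.Gamma_pos_of_pos hx).ne'

lemma log_Gamma_add_one {x : ℝ} (hx : 0 < x) :
    (Real.log ∘ Real.Gamma) (x + 1) = (Real.log ∘ Real.Gamma) x + Real.log x := by
  simp only [Function.comp]
  rw [Real.Gamma_add_one hx.ne', Real.log_mul hx.ne' (Real.Gamma_pos_of_pos hx).ne', add_comm]

lemma digamma_add_one {x : ℝ} (hx : 0 < x) : digamma (x + 1) = digamma x + 1 / x := by
  have h1 : HasDerivAt (fun y => (Real.log ∘ Real.Gamma) (y + 1)) (digamma (x + 1)) x :=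
    (hasDerivAt_log_Gamma (by linarith : 0 < x + 1)).comp_add_const x 1
  have h2 : HasDerivAt (fun y => (Real.log ∘ Real.Gamma) y + Real.log y) (digamma x + x⁻¹) x :=
    (hasDerivAt_log_Gamma hx).add (Real.hasDerivAt_log hx.ne')
  have h3 : (fun y => (Real.log ∘ Real.Gamma) (y + 1)) =ᶠ[𝓝 x]
      fun y => (Real.log ∘ Real.Gamma) y + Real.log y := by
    filter_upwards [lt_mem_nhds hx] with y hy using log_Gamma_add_one hy
  rw [one_div]
  exact h1.unique (h2.congr_of_eventuallyEq h3)

/-- Convexity of `log ∘ Γ`: its graph lies above each of its tangent lines. -/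
lemma tangent_le_log_Gamma {x y : ℝ} (hx : 0 < x) (hy : 0 < y) :
    digamma x * (y - x) ≤ (Real.log ∘ Real.Gamma) y - (Real.log ∘ Real.Gamma) x := by
  have hc := Real.convexOn_log_Gamma
  have hd := hasDerivAt_log_Gamma hx
  rcases lt_trichotomy x y with h | h | h
  · have := hc.le_slope_of_hasDerivAt hx hy h hd
    rwa [slope_def_field, le_div_iff₀ (by linarith)] at this
  · simp [h]
  · have := hc.slope_le_of_hasDerivAt hy hx h hd
    rw [slope_def_field, div_le_iff₀ (by linarith)] at this
    linarith

lemma digamma_le_log {x : ℝ} (hx : 0 < x) : digamma x ≤ Real.log x := by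
  have h := tangent_le_log_Gamma hx (by linarith : 0 < x + 1)
  rw [log_Gamma_add_one hx] at h
  linarith

lemma log_sub_one_le_digamma {x : ℝ} (hx : 1 < x) : Real.log (x - 1) ≤ digamma x := by
  have h := tangent_le_log_Gamma (by linarith : 0 < x) (by linarith : 0 < x - 1)
  have h2 := log_Gamma_add_one (by linarith : 0 < x - 1)
  rw [sub_add_cancel] at h2
  linarith

lemma tendsto_log_add_sub_log (c : ℝ) :
    Tendsto (fun x : ℝ => Real.log (x + c) - Real.log x) atTop (𝓝 0) := by
  have h1 : Tendsto (fun x : ℝ => 1 + c / x) atTop (𝓝 (1 + 0)) :=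
    tendsto_const_nhds.add (tendsto_const_nhds.div_atTop tendsto_id)
  rw [add_zero] at h1
  have h2 := (Real.continuousAt_log one_ne_zero).tendsto.comp h1
  rw [Real.log_one] at h2
  refine h2.congr' ?_
  filter_upwards [eventually_gt_atTop 0, eventually_gt_atTop (-c)] with x hx hc
  rw [← Real.log_div (by linarith) hx.ne', Function.comp]
  congr 1
  field_simp

lemma tendsto_digamma_sub_log :
    Tendsto (fun x : ℝ => digamma x - Real.log x) atTop (𝓝 0) := by
  refine tendsto_of_tendsto_of_tendsto_of_le_of_le' (tendsto_log_add_sub_log (-1))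
    tendsto_const_nhds ?_ ?_
  · filter_upwards [eventually_gt_atTop 1] with x hx
    have := log_sub_one_le_digamma hx
    rw [← sub_eq_add_neg]
    linarith
  · filter_upwards [eventually_gt_atTop 0] with x hx
    linarith [digamma_le_log hx]

lemma tendsto_remainder (t : ℝ) :
    Tendsto (fun x : ℝ => (Real.log ∘ Real.Gamma) x - (Real.log ∘ Real.Gamma) (x - t)
      - t * digamma x) atTop (𝓝 0) := by
  have h1 : Tendsto (fun x : ℝ => t * (digamma (x + -t) - digamma x)) atTop (𝓝 0) := by
    have hs := tendsto_digamma_sub_log.comp (tendsto_atTop_add_const_right atTop (-t) tendsto_id)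
    have := (((hs.sub tendsto_digamma_sub_log).add (tendsto_log_add_sub_log (-t))).const_mul t)
    simp only [sub_zero, add_zero, mul_zero] at this
    refine this.congr fun x => ?_
    simp only [Function.comp, id]
    ring
  refine tendsto_of_tendsto_of_tendsto_of_le_of_le' h1 tendsto_const_nhds ?_ ?_
  · filter_upwards [eventually_gt_atTop 0, eventually_gt_atTop t] with x hx hxt
    have := tangent_le_log_Gamma (by linarith : 0 < x - t) hx
    rw [← sub_eq_add_neg]
    linarith
  · filter_upwards [eventually_gt_atTop 0, eventually_gt_atTop t] with x hx hxt
    have := tangent_le_log_Gamma hx (by linarith : 0 < x - t)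
    linarith

/-- The telescoping sum of the first `N` rows of the double series. -/
lemma sum_range_row {a t : ℝ} (ha : 0 < a) (ht : t < a) (N : ℕ) :
    ∑ k ∈ Finset.range N, (-Real.log (1 - t / (k + a)) - t / (k + a)) =
      t * digamma a + (Real.log ∘ Real.Gamma) (a - t) - (Real.log ∘ Real.Gamma) a
      + ((Real.log ∘ Real.Gamma) (N + a) - (Real.log ∘ Real.Gamma) (N + a - t)
        - t * digamma (N + a)) := by
  induction N with
  | zero =>
    simp only [Finset.range_zero, Finset.sum_empty, Nat.cast_zero, zero_add]
    ring
  | succ N ih =>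
    have hN : (0 : ℝ) ≤ N := N.cast_nonneg
    have h0 : 0 < (N : ℝ) + a := by linarith
    have h1 : 0 < (N : ℝ) + a - t := by linarith
    have e1 : ((N + 1 : ℕ) : ℝ) + a = (N + a) + 1 := by push_cast; ring
    have e2 : (N : ℝ) + a + 1 - t = (N + a - t) + 1 := by ring
    have e3 : 1 - t / (N + a) = (N + a - t) / (N + a) := by field_simp
    rw [Finset.sum_range_succ, ih, e1, e2, log_Gamma_add_one h0, log_Gamma_add_one h1,
      digamma_add_one h0, e3, Real.log_div h1.ne' h0.ne']
    ring

lemma tendsto_sum_row {a t : ℝ} (ha : 0 < a) (ht : t < a) :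
    Tendsto (fun N => ∑ k ∈ Finset.range N, (-Real.log (1 - t / (k + a)) - t / (k + a))) atTop
      (𝓝 (t * digamma a + (Real.log ∘ Real.Gamma) (a - t) - (Real.log ∘ Real.Gamma) a)) := by
  simp only [sum_range_row ha ht]
  have h : Tendsto (fun N : ℕ => (N : ℝ) + a) atTop atTop :=
    tendsto_atTop_add_const_right _ _ tendsto_natCast_atTop_atTop
  simpa only [add_zero, Function.comp] using ((tendsto_remainder t).comp h).const_add
    (t * digamma a + (Real.log ∘ Real.Gamma) (a - t) - (Real.log ∘ Real.Gamma) a)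

lemma abs_div_lt_one {a t : ℝ} (ht : |t| < a) (k : ℕ) : |t / (k + a)| < 1 := by
  have hk : (0 : ℝ) ≤ k := k.cast_nonneg
  have h0 := abs_nonneg t
  rw [abs_div, abs_of_pos (by linarith : 0 < (k : ℝ) + a), div_lt_one (by linarith)]
  linarith

lemma hasSum_row {x : ℝ} (hx : |x| < 1) :
    HasSum (fun n : ℕ => x ^ (n + 2) / ((n : ℝ) + 2)) (-Real.log (1 - x) - x) := by
  have h := (hasSum_nat_add_iff' 1).mpr (Real.hasSum_pow_div_log_of_abs_lt_one hx)
  simp only [Finset.sum_range_one, Nat.cast_zero, zero_add, pow_one, div_one] at h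
  refine h.congr_fun fun n => ?_
  push_cast
  ring

lemma summable_terms {a t : ℝ} (ht : |t| < a) :
    Summable (fun p : ℕ × ℕ => (t / (p.1 + a)) ^ (p.2 + 2) / ((p.2 : ℝ) + 2)) := by
  have ha : 0 < a := (abs_nonneg t).trans_lt ht
  have ht' : |(|t|)| < a := by rwa [abs_abs]
  have hnn : ∀ k n : ℕ, 0 ≤ (|t| / (k + a)) ^ (n + 2) / ((n : ℝ) + 2) := fun k n => by positivity
  have hrow := fun k : ℕ => hasSum_row (abs_div_lt_one ht' k)
  have habs : Summable (fun p : ℕ × ℕ => (|t| / (p.1 + a)) ^ (p.2 + 2) / ((p.2 : ℝ) + 2)) := by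
    refine (summable_prod_of_nonneg fun p => hnn p.1 p.2).mpr ⟨fun k => (hrow k).summable, ?_⟩
    simp only [fun k : ℕ => (hrow k).tsum_eq]
    exact ((hasSum_iff_tendsto_nat_of_nonneg (fun k => (hrow k).nonneg (hnn k)) _).mpr
      (tendsto_sum_row ha ht)).summable
  refine habs.of_norm_bounded fun p => le_of_eq ?_
  have h1 : (0 : ℝ) < p.1 + a := by positivity
  have h2 : (0 : ℝ) < p.2 + 2 := by positivity
  rw [Real.norm_eq_abs, abs_div, abs_pow, abs_div, abs_of_pos h1, abs_of_pos h2]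

/-- For `a > 0` and `|t| < a`,
`∑_{n=1}^∞ ζ(n+1, a) t^{n+1}/(n+1) = t ψ(a) + log Γ(a - t) - log Γ(a)`. -/
theorem sum_hurwitzZeta_div_eq (a t : ℝ) (ha : 0 < a) (ht : |t| < a) :
    HasSum (fun n : ℕ => hurwitzZetaSum ((n : ℝ) + 2) a * t ^ (n + 2) / ((n : ℝ) + 2))
      (t * digamma a + Real.log (Real.Gamma (a - t)) - Real.log (Real.Gamma a)) := by
  have hs := summable_terms ht
  have hrow : ∀ k : ℕ, HasSum (fun n : ℕ => (t / (k + a)) ^ (n + 2) / ((n : ℝ) + 2))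
      (-Real.log (1 - t / (k + a)) - t / (k + a)) :=
    fun k => hasSum_row (abs_div_lt_one ht k)
  have hrows := hs.hasSum.prod_fiberwise hrow
  have hval := tendsto_nhds_unique hrows.tendsto_sum_nat
    (tendsto_sum_row ha ((le_abs_self t).trans_lt ht))
  have hsum := hs.hasSum
  rw [hval] at hsum
  have hswap : HasSum (fun p : ℕ × ℕ => (t / (p.2 + a)) ^ (p.1 + 2) / ((p.1 : ℝ) + 2))
      (t * digamma a + (Real.log ∘ Real.Gamma) (a - t) - (Real.log ∘ Real.Gamma) a) :=
    (Equiv.prodComm ℕ ℕ).hasSum_iff.mpr hsum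
  have hcol : ∀ n : ℕ, HasSum (fun k : ℕ => (t / (k + a)) ^ (n + 2) / ((n : ℝ) + 2))
      (hurwitzZetaSum ((n : ℝ) + 2) a * t ^ (n + 2) / ((n : ℝ) + 2)) := by
    intro n
    have hn : hurwitzZetaSum ((n : ℝ) + 2) a * t ^ (n + 2) / ((n : ℝ) + 2) =
        ∑' k : ℕ, (t / (k + a)) ^ (n + 2) / ((n : ℝ) + 2) := by
      rw [hurwitzZetaSum, ← tsum_mul_right, ← tsum_div_const]
      refine tsum_congr fun k => ?_
      have h1 : (0 : ℝ) < k + a := by positivity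
      have e : ((n : ℝ) + 2) = ((n + 2 : ℕ) : ℝ) := by push_cast; ring
      rw [e, Real.rpow_neg h1.le, Real.rpow_natCast, div_pow]
      ring
    rw [hn]
    exact (hswap.summable.prod_factor n).hasSum
  exact hswap.prod_fiberwise hcol
end

section
/- Let z be complex with Re z > 0. Then log z = ∫_0^∞ (e^{−t} − e^{−zt}) t^{−1} dt, the integral converging, where log denotes the principal branch of the complex logarithm. -/
/-!
Both sides are holomorphic on the right half-plane, vanish at `z = 1`, and have derivative `1 / z`,
so they agree. The derivative of the integrand in `z` is `e^{-zt}`, and everything rests on the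
bound `‖e^{-wt}‖ ≤ e^{-ct}` for `c ≤ Re w`, `0 < t`:
by the mean value inequality on the half-plane `c ≤ Re w` it dominates the integrand by
`‖z - 1‖ e^{-ct}` with `c = min 1 (Re z)` (`integrableOn_frullani`), and it justifies
differentiating under the integral sign (`hasDerivAt_frullani`).
-/

open MeasureTheory

lemma hasDerivAt_integrand {t : ℝ} (ht : 0 < t) (w : ℂ) :
    HasDerivAt (fun w : ℂ => (Complex.exp (-(t : ℂ)) - Complex.exp (-w * t)) / (t : ℂ))
      (Complex.exp (-w * t)) w := by
  have htc : (t : ℂ) ≠ 0 := by exact_mod_cast ht.ne'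
  have h := ((((hasDerivAt_id w).neg.mul_const (t : ℂ)).cexp).const_sub
    (Complex.exp (-(t : ℂ)))).div_const (t : ℂ)
  refine h.congr_deriv ?_
  simp [htc]

lemma norm_cexp_neg_mul_le {t c : ℝ} (ht : 0 < t) {w : ℂ} (hw : c ≤ w.re) :
    ‖Complex.exp (-w * t)‖ ≤ Real.exp (-c * t) := by
  rw [Complex.norm_exp]
  simp only [Complex.mul_re, Complex.neg_re, Complex.ofReal_re, Complex.ofReal_im, mul_zero,
    sub_zero]
  gcongr

lemma aestronglyMeasurable_integrand (z : ℂ) :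
    AEStronglyMeasurable
      (fun t : ℝ => (Complex.exp (-(t : ℂ)) - Complex.exp (-z * t)) / (t : ℂ))
      (volume.restrict (Set.Ioi 0)) := by
  apply Measurable.aestronglyMeasurable
  fun_prop

lemma integrableOn_frullani (z : ℂ) (hz : 0 < z.re) :
    IntegrableOn
      (fun t : ℝ => (Complex.exp (-(t : ℂ)) - Complex.exp (-z * t)) / (t : ℂ)) (Set.Ioi 0) := by
  have hc : 0 < min 1 z.re := lt_min one_pos hz
  refine Integrable.mono'
    ((integrableOn_exp_mul_Ioi (neg_lt_zero.mpr hc) 0).mul_const ‖z - 1‖)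
    (aestronglyMeasurable_integrand z) ?_
  filter_upwards [ae_restrict_mem measurableSet_Ioi] with t ht
  -- The integrand, as a function of `z`, vanishes at `1`; compare its values at `z` and `1`.
  have h := (convex_halfSpace_re_ge (min 1 z.re)).norm_image_sub_le_of_norm_hasDerivWithin_le
    (fun w _ => (hasDerivAt_integrand ht w).hasDerivWithinAt)
    (fun w hw => norm_cexp_neg_mul_le ht hw)
    (show (1 : ℂ) ∈ {w : ℂ | min 1 z.re ≤ w.re} by simp)
    (show z ∈ {w : ℂ | min 1 z.re ≤ w.re} by simp)
  simpa using h

lemma hasDerivAt_frullani (z : ℂ) (hz : 0 < z.re) :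
    HasDerivAt (fun z : ℂ => ∫ t in Set.Ioi (0 : ℝ),
      (Complex.exp (-(t : ℂ)) - Complex.exp (-z * t)) / (t : ℂ)) z⁻¹ z := by
  have hs : {w : ℂ | z.re / 2 < w.re} ∈ nhds z :=
    (isOpen_lt continuous_const Complex.continuous_re).mem_nhds (half_lt_self hz)
  have h := (hasDerivAt_integral_of_dominated_loc_of_deriv_le (𝕜 := ℂ)
    (μ := volume.restrict (Set.Ioi (0 : ℝ)))
    (F := fun (w : ℂ) (t : ℝ) => (Complex.exp (-(t : ℂ)) - Complex.exp (-w * t)) / (t : ℂ))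
    (F' := fun (w : ℂ) (t : ℝ) => Complex.exp (-w * t))
    (bound := fun t => Real.exp (-(z.re / 2) * t)) hs
    (Filter.Eventually.of_forall aestronglyMeasurable_integrand)
    (integrableOn_frullani z hz)
    (Continuous.aestronglyMeasurable (by fun_prop))
    (by
      filter_upwards [ae_restrict_mem measurableSet_Ioi] with t ht w hw
      exact norm_cexp_neg_mul_le ht (le_of_lt hw))
    (integrableOn_exp_mul_Ioi (by linarith) 0)
    (by
      filter_upwards [ae_restrict_mem measurableSet_Ioi] with t ht w _
      exact hasDerivAt_integrand ht w)).2
  rw [integral_exp_mul_complex_Ioi (by simpa using hz)] at h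
  simpa [neg_div_neg_eq] using h

/-- For `Re z > 0`, `log z = ∫_0^∞ (e^{-t} - e^{-zt}) t⁻¹ dt`, the integral converging
(principal logarithm, Frullani). -/
theorem complex_log_eq_integral (z : ℂ) (hz : 0 < z.re) :
    IntegrableOn
        (fun t : ℝ => (Complex.exp (-(t : ℂ)) - Complex.exp (-z * t)) / (t : ℂ)) (Set.Ioi 0)
      ∧ Complex.log z
        = ∫ t in Set.Ioi (0 : ℝ),
            (Complex.exp (-(t : ℂ)) - Complex.exp (-z * t)) / (t : ℂ) := by
  refine ⟨integrableOn_frullani z hz, ?_⟩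
  have hlog : ∀ w : ℂ, 0 < w.re → HasDerivAt Complex.log w⁻¹ w :=
    fun w hw => Complex.hasDerivAt_log (Or.inl hw)
  exact (isOpen_lt continuous_const Complex.continuous_re).eqOn_of_deriv_eq
    (convex_halfSpace_re_gt 0).isPreconnected
    (fun w hw => (hlog w hw).differentiableAt.differentiableWithinAt)
    (fun w hw => (hasDerivAt_frullani w hw).differentiableAt.differentiableWithinAt)
    (fun w hw => (hlog w hw).deriv.trans (hasDerivAt_frullani w hw).deriv.symm)
    (show (1 : ℂ) ∈ {w : ℂ | 0 < w.re} by simp) (by simp) hz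
end

section
/- Let a, t be real numbers with 0 < a, 0 ≤ t < a, and a + t < 1. Then ∫_0^t log Γ(a+s) ds = −t²/2 + (log √(2π) − a + 1/2) t + ζ'(−1, a+t) − ζ'(−1, a). -/
/-!
The idea is to differentiate `ζ'(-1, x)` in `x`: the claim is equivalent to
`d/dx ζ'(-1, x) = log Γ(x) + x - 1/2 - log(2π)/2` on `(0, 1)`, by the fundamental theorem of calculus.

To have a formula for `ζ(s, x)` near `s = -1` in which `x` appears explicitly, expand each
Dirichlet term `(k + x)^(-s)`, `k ≥ 1`, to second order in `x / k`. The main terms sum to values of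
the Riemann zeta function, which leads to
`ζ(s, x) - ζ(s) = x^(-s) - x · s ζ(s+1) + (s/2) x² · (s+1) ζ(s+2) + ∑ₖ Rₖ(s, x)`,
first for `Re s > 1` (`hurwitz_sub_eq_of_one_lt_re`). The remainders are `O(k^(-Re s - 3))`
(`norm_remTerm_le`), so the right side is holomorphic for `Re s > -3/2`, and the formula persists
there by the identity theorem (`hurwitz_sub_eq`). The entire function
`riemannZeta₁ s = (s - 1) ζ(s)` absorbs the poles of `ζ(s+1)` and `ζ(s+2)`.

Differentiating at `s = -1` (`hzeta'_neg_one`) uses `ζ(0) = -1/2`, `ζ'(0) = -log(2π)/2` and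
`riemannZeta₁'(1) = γ`. The `x`-derivative of the resulting series is
`∑ₖ (x/k - log(1 + x/k)) = log Γ(x) + log x + γ x`, the logarithmic Weierstrass product
(`tsum_eq_logGamma`), and all terms but the expected ones cancel (`hasDerivAt_zetaPart`).
-/

/-- The derivative `ζ'(s, a)` of the analytically continued Hurwitz zeta function with respect
to `s`, for `a ∈ (0,1)`. -/
noncomputable def hzeta' (s : ℂ) (a : ℝ) : ℂ :=
  deriv (fun z : ℂ => HurwitzZeta.hurwitzZeta (a : UnitAddCircle) z) s

namespace HurwitzLogGamma

open Complex Set Filter Topology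

/-! ### Binomial remainder estimates -/

/-- A function vanishing at `0` whose derivative is `O(y ^ n)` is `O(y ^ (n + 1))`, with the same
constant. -/
lemma norm_le_of_deriv_bound {f g : ℝ → ℂ} {C : ℝ} {n : ℕ} (hC : 0 ≤ C) (h0 : f 0 = 0)
    (hd : ∀ y, 0 ≤ y → HasDerivAt f (g y) y) (hb : ∀ y, 0 ≤ y → ‖g y‖ ≤ C * y ^ n)
    {y : ℝ} (hy : 0 ≤ y) : ‖f y‖ ≤ C * y ^ (n + 1) := by
  have h := (convex_Icc (0 : ℝ) y).norm_image_sub_le_of_norm_hasDerivWithin_le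
    (f := f) (f' := g) (C := C * y ^ n) (fun z hz => (hd z hz.1).hasDerivWithinAt)
    (fun z hz => (hb z hz.1).trans (by have := hz.1; have := hz.2; gcongr))
    (left_mem_Icc.2 hy) (right_mem_Icc.2 hy)
  rw [h0, sub_zero, sub_zero, Real.norm_of_nonneg hy] at h
  calc ‖f y‖ ≤ _ := h
    _ = _ := by ring

lemma hasDerivAt_one_add_cpow (s : ℂ) {y : ℝ} (hy : 0 ≤ y) :
    HasDerivAt (fun y : ℝ => (1 + y : ℂ) ^ (-s)) (-s * (1 + y : ℂ) ^ (-(s + 1))) y := by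
  have h1 : HasDerivAt (fun z : ℂ => 1 + z) 1 (y : ℂ) := (hasDerivAt_id (y : ℂ)).const_add 1
  have h2 : (1 + y : ℂ) ∈ slitPlane := by
    left; simp; linarith
  convert! (h1.cpow_const h2 (c := -s)).comp_ofReal using 1
  rw [mul_one]; congr 2; ring

lemma norm_one_add_cpow_le {s : ℂ} (hs : 0 ≤ s.re) {y : ℝ} (hy : 0 ≤ y) :
    ‖(1 + y : ℂ) ^ (-s)‖ ≤ 1 := by
  have : (1 + y : ℂ) = ((1 + y : ℝ) : ℂ) := by push_cast; ring
  rw [this, norm_cpow_eq_rpow_re_of_pos (by linarith)]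
  exact Real.rpow_le_one_of_one_le_of_nonpos (by linarith) (by simpa using hs)

/-- The base case of the binomial remainder bounds: each of the next two follows by integrating the
preceding one at `s + 1`. -/
lemma norm_taylor_zero {s : ℂ} (hs : -1 ≤ s.re) {y : ℝ} (hy : 0 ≤ y) :
    ‖(1 + y : ℂ) ^ (-s) - 1‖ ≤ ‖s‖ * y := by
  have := norm_le_of_deriv_bound (f := fun y : ℝ => (1 + y : ℂ) ^ (-s) - 1)
    (g := fun y : ℝ => -s * (1 + y : ℂ) ^ (-(s + 1))) (C := ‖s‖) (n := 0) (norm_nonneg _)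
    (by simp) (fun y hy => (hasDerivAt_one_add_cpow s hy).sub_const _)
    (fun y hy => by
      rw [norm_mul, norm_neg, pow_zero]
      gcongr
      exact norm_one_add_cpow_le (by simp; linarith) hy) hy
  simpa using this

lemma norm_taylor_one {s : ℂ} (hs : -2 ≤ s.re) {y : ℝ} (hy : 0 ≤ y) :
    ‖(1 + y : ℂ) ^ (-s) - 1 + s * y‖ ≤ ‖s‖ * ‖s + 1‖ * y ^ 2 := by
  refine norm_le_of_deriv_bound (f := fun y : ℝ => (1 + y : ℂ) ^ (-s) - 1 + s * y)
    (g := fun y : ℝ => -s * ((1 + y : ℂ) ^ (-(s + 1)) - 1)) (C := ‖s‖ * ‖s + 1‖) (n := 1)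
    (by positivity) (by simp) (fun y hy => ?_) (fun y hy => ?_) hy
  · have h := ((hasDerivAt_one_add_cpow s hy).sub_const 1).add
      ((Complex.ofRealCLM.hasDerivAt (x := y)).const_mul s)
    convert! h using 1
    simp; ring
  · rw [norm_mul, norm_neg, pow_one, mul_assoc]
    gcongr
    exact norm_taylor_zero (by simp; linarith) hy

lemma norm_taylor_two {s : ℂ} (hs : -3 ≤ s.re) {y : ℝ} (hy : 0 ≤ y) :
    ‖(1 + y : ℂ) ^ (-s) - 1 + s * y - s * (s + 1) / 2 * y ^ 2‖
      ≤ ‖s‖ * (‖s + 1‖ * ‖s + 1 + 1‖) * y ^ 3 := by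
  refine norm_le_of_deriv_bound
    (f := fun y : ℝ => (1 + y : ℂ) ^ (-s) - 1 + s * y - s * (s + 1) / 2 * y ^ 2)
    (g := fun y : ℝ => -s * ((1 + y : ℂ) ^ (-(s + 1)) - 1 + (s + 1) * y))
    (C := ‖s‖ * (‖s + 1‖ * ‖s + 1 + 1‖)) (n := 2)
    (by positivity) (by simp) (fun y hy => ?_) (fun y hy => ?_) hy
  · have h := (((hasDerivAt_one_add_cpow s hy).sub_const 1).add
      ((Complex.ofRealCLM.hasDerivAt (x := y)).const_mul s)).sub
      (((Complex.ofRealCLM.hasDerivAt (x := y)).pow 2).const_mul (s * (s + 1) / 2))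
    convert! h using 1
    simp; ring
  · rw [norm_mul, norm_neg, mul_assoc]
    gcongr
    exact norm_taylor_one (by simp; linarith) hy

/-! ### Continuation of the Hurwitz zeta function to a neighbourhood of `-1` -/

/-- The `k`-th Dirichlet term `(k + x) ^ (-s)`, `k = n + 1`, minus its second-order binomial
expansion in `x / k`. -/
noncomputable def remTerm (x : ℝ) (n : ℕ) (s : ℂ) : ℂ :=
  ((n : ℂ) + 1 + x) ^ (-s) - ((n : ℂ) + 1) ^ (-s) + s * x * ((n : ℂ) + 1) ^ (-s - 1)
    - s * (s + 1) / 2 * x ^ 2 * ((n : ℂ) + 1) ^ (-s - 2)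

/-- A bounded convex domain containing both `2`, where the Dirichlet series converges, and `-1`. -/
def dom : Set ℂ := {s | -(3 / 2 : ℝ) < s.re} ∩ Metric.ball 0 3

lemma isOpen_dom : IsOpen dom :=
  (isOpen_lt continuous_const continuous_re).inter Metric.isOpen_ball

lemma isPreconnected_dom : IsPreconnected dom :=
  ((convex_halfSpace_re_gt _).inter (convex_ball _ _)).isPreconnected

lemma neg_one_mem_dom : (-1 : ℂ) ∈ dom := by
  refine ⟨?_, ?_⟩
  · simp; norm_num
  · simp

lemma two_mem_dom : (2 : ℂ) ∈ dom := by
  refine ⟨?_, ?_⟩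
  · simp; norm_num
  · simp; norm_num

lemma remTerm_eq {x : ℝ} (hx : 0 ≤ x) (n : ℕ) (s : ℂ) :
    remTerm x n s = ((n : ℂ) + 1) ^ (-s) *
      ((1 + (x / (n + 1) : ℝ) : ℂ) ^ (-s) - 1 + s * (x / (n + 1) : ℝ)
        - s * (s + 1) / 2 * (x / (n + 1) : ℝ) ^ 2) := by
  have hk : (0 : ℝ) < n + 1 := by positivity
  have hk' : ((n : ℂ) + 1) ≠ 0 := by exact_mod_cast hk.ne'
  have h1 : ((n : ℂ) + 1 + x) ^ (-s)
      = ((n : ℂ) + 1) ^ (-s) * (1 + (x / (n + 1) : ℝ) : ℂ) ^ (-s) := by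
    have := Complex.mul_cpow_ofReal_nonneg hk.le (b := 1 + x / (n + 1)) (by positivity) (-s)
    push_cast at this ⊢
    rw [← this]
    congr 1
    field_simp
  have h2 : ((n : ℂ) + 1) ^ (-s - 1) = ((n : ℂ) + 1) ^ (-s) / (n + 1) := by
    rw [cpow_sub _ _ hk', cpow_one]
  have h3 : ((n : ℂ) + 1) ^ (-s - 2) = ((n : ℂ) + 1) ^ (-s) / (n + 1) ^ 2 := by
    rw [cpow_sub _ _ hk']; norm_cast
  rw [remTerm, h1, h2, h3]
  push_cast
  field_simp

lemma norm_remTerm_le {x : ℝ} (hx : 0 < x) (hx1 : x < 1) (n : ℕ) {s : ℂ} (hs : s ∈ dom) :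
    ‖remTerm x n s‖ ≤ 60 * (1 / ((n : ℝ) + 1) ^ (3 / 2 : ℝ)) := by
  have hk : (0 : ℝ) < n + 1 := by positivity
  obtain ⟨hs1, hs2⟩ := hs
  have hs1 : -(3 / 2 : ℝ) < s.re := hs1
  have hn : ‖s‖ ≤ 3 := (mem_ball_zero_iff.1 hs2).le
  have hn1 : ‖s + 1‖ ≤ 4 := (norm_add_le _ _).trans (by simp; linarith)
  have hn2 : ‖s + 1 + 1‖ ≤ 5 := (norm_add_le _ _).trans (by simp; linarith)
  rw [remTerm_eq hx.le, norm_mul]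
  have h1 : ‖((n : ℂ) + 1) ^ (-s)‖ = ((n : ℝ) + 1) ^ (-s.re) := by
    have := norm_cpow_eq_rpow_re_of_pos hk (-s)
    push_cast at this
    simpa using this
  have h2 := norm_taylor_two (s := s) (by linarith) (y := x / (n + 1)) (by positivity)
  have h3 : ‖s‖ * (‖s + 1‖ * ‖s + 1 + 1‖) * (x / (n + 1)) ^ 3
      ≤ 3 * (4 * 5) * (1 / (n + 1)) ^ 3 := by gcongr
  rw [h1]
  calc _ ≤ ((n : ℝ) + 1) ^ (3 / 2 : ℝ) * (3 * (4 * 5) * (1 / (n + 1)) ^ 3) := by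
        refine mul_le_mul ?_ (h2.trans h3) (norm_nonneg _) (by positivity)
        exact Real.rpow_le_rpow_of_exponent_le (by linarith [Nat.cast_nonneg (α := ℝ) n])
          (by linarith)
    _ = _ := by
        have h4 : ((n : ℝ) + 1) ^ 3 = ((n : ℝ) + 1) ^ (3 / 2 : ℝ) * ((n : ℝ) + 1) ^ (3 / 2 : ℝ) := by
          rw [← Real.rpow_add hk]; norm_num
        rw [div_pow, one_pow, h4]
        field_simp
        norm_num

lemma summable_bound : Summable fun n : ℕ => 60 * (1 / ((n : ℝ) + 1) ^ (3 / 2 : ℝ)) := by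
  have h := (Real.summable_one_div_nat_rpow (p := 3 / 2)).2 (by norm_num)
  have := (summable_nat_add_iff 1).2 h
  push_cast at this
  exact this.mul_left 60

/-- The derivative of `remTerm x n` at `s = -1`, as a function of `x`. -/
noncomputable def remDeriv (n : ℕ) (x : ℝ) : ℝ :=
  -((n + 1 + x) * Real.log (n + 1 + x)) + (n + 1) * Real.log (n + 1) + x
    + x * Real.log (n + 1) + x ^ 2 / (2 * (n + 1))

lemma hasDerivAt_cpow_neg {c : ℝ} (hc : 0 < c) (s : ℂ) :
    HasDerivAt (fun s : ℂ => (c : ℂ) ^ (-s)) (-(Real.log c * (c : ℂ) ^ (-s))) s := by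
  have := (hasDerivAt_neg s).const_cpow (c := (c : ℂ)) (Or.inl (by exact_mod_cast hc.ne'))
  convert! this using 1
  rw [Complex.ofReal_log hc.le]; ring

lemma hasDerivAt_cpow_neg_sub {c : ℝ} (hc : 0 < c) (s d : ℂ) :
    HasDerivAt (fun s : ℂ => (c : ℂ) ^ (-s - d)) (-(Real.log c * (c : ℂ) ^ (-s - d))) s := by
  have := ((hasDerivAt_neg s).sub_const d).const_cpow (c := (c : ℂ))
    (Or.inl (by exact_mod_cast hc.ne'))
  convert! this using 1
  rw [Complex.ofReal_log hc.le]; ring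

lemma hasDerivAt_remTerm {x : ℝ} (hx : 0 < x) (n : ℕ) (s : ℂ) :
    HasDerivAt (remTerm x n)
      (-(Real.log (n + 1 + x) * ((n : ℂ) + 1 + x) ^ (-s))
        + Real.log (n + 1) * ((n : ℂ) + 1) ^ (-s)
        + (x * ((n : ℂ) + 1) ^ (-s - 1) - s * x * (Real.log (n + 1) * ((n : ℂ) + 1) ^ (-s - 1)))
        - ((2 * s + 1) / 2 * x ^ 2 * ((n : ℂ) + 1) ^ (-s - 2)
          - s * (s + 1) / 2 * x ^ 2 * (Real.log (n + 1) * ((n : ℂ) + 1) ^ (-s - 2)))) s := by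
  have hk : (0 : ℝ) < n + 1 := by positivity
  have hkx : (0 : ℝ) < n + 1 + x := by positivity
  have h1 := hasDerivAt_cpow_neg hkx s
  have h2 := hasDerivAt_cpow_neg hk s
  have h3 := ((hasDerivAt_id s).mul_const (x : ℂ)).mul (hasDerivAt_cpow_neg_sub hk s 1)
  have h4 := ((((hasDerivAt_id s).mul ((hasDerivAt_id s).add_const 1)).div_const 2).mul_const
    ((x : ℂ) ^ 2)).mul (hasDerivAt_cpow_neg_sub hk s 2)
  have h := ((h1.sub h2).add h3).sub h4
  convert! h using 1
  · ext z
    simp [remTerm]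
  · simp; ring

lemma hasDerivAt_remTerm_neg_one {x : ℝ} (hx : 0 < x) (n : ℕ) :
    HasDerivAt (remTerm x n) (remDeriv n x : ℂ) (-1) := by
  have hk : ((n : ℂ) + 1) ≠ 0 := by exact_mod_cast (Nat.succ_ne_zero n)
  convert! hasDerivAt_remTerm hx n (-1) using 1
  have e : (-(-1) - 2 : ℂ) = -1 := by norm_num
  rw [e, cpow_neg_one]
  simp [remDeriv]
  field_simp
  ring

lemma differentiableOn_tsum_remTerm {x : ℝ} (hx : 0 < x) (hx1 : x < 1) :
    DifferentiableOn ℂ (fun s => ∑' n, remTerm x n s) dom :=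
  differentiableOn_tsum_of_summable_norm summable_bound
    (fun n s _ => (hasDerivAt_remTerm hx n s).differentiableAt.differentiableWithinAt) isOpen_dom
    (fun n _ hs => norm_remTerm_le hx hx1 n hs)

lemma hasSum_remDeriv {x : ℝ} (hx : 0 < x) (hx1 : x < 1) :
    HasSum (fun n => (remDeriv n x : ℂ)) (deriv (fun s => ∑' n, remTerm x n s) (-1)) := by
  have := hasSum_deriv_of_summable_norm summable_bound
    (fun n s _ => (hasDerivAt_remTerm hx n s).differentiableAt.differentiableWithinAt) isOpen_dom
    (fun n _ hs => norm_remTerm_le hx hx1 n hs) neg_one_mem_dom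
  simpa only [(hasDerivAt_remTerm_neg_one hx _).deriv] using this

lemma hasSum_zeta_shift {s : ℂ} (hs : 1 < s.re) :
    HasSum (fun n : ℕ => ((n : ℂ) + 1) ^ (-s)) (riemannZeta s) := by
  have h := (summable_nat_add_iff 1).2 (Complex.summable_one_div_nat_cpow.2 hs)
  rw [zeta_eq_tsum_one_div_nat_add_one_cpow hs]
  convert! h.hasSum using 1
  · ext n; push_cast; rw [cpow_neg, one_div]
  · simp

lemma riemannZeta₁_eq {s : ℂ} (hs : s ≠ 1) : riemannZeta₁ s = (s - 1) * riemannZeta s := by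
  rw [riemannZeta_eq_inv_sub_mul hs, mul_inv_cancel_left₀ (sub_ne_zero.2 hs)]

/-- The continuation formula in the half-plane of convergence. -/
lemma hurwitz_sub_eq_of_one_lt_re {x : ℝ} (hx : 0 < x) (hx1 : x < 1) {s : ℂ} (hs : 1 < s.re) :
    HurwitzZeta.hurwitzZeta (x : UnitAddCircle) s - riemannZeta s
      = (x : ℂ) ^ (-s) - x * riemannZeta₁ (s + 1) + s / 2 * x ^ 2 * riemannZeta₁ (s + 2)
        + ∑' n, remTerm x n s := by
  have h0 := HurwitzZeta.hasSum_hurwitzZeta_of_one_lt_re (a := x) ⟨hx.le, hx1.le⟩ hs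
  have h0' := (hasSum_nat_add_iff' 1).2 h0
  have h1 := hasSum_zeta_shift hs
  have h2 := hasSum_zeta_shift (s := s + 1) (by simp; linarith)
  have h3 := hasSum_zeta_shift (s := s + 2) (by simp; linarith)
  have h := ((h0'.sub h1).add (h2.mul_left (s * x))).sub (h3.mul_left (s * (s + 1) / 2 * x ^ 2))
  replace h := h.congr_fun (g := fun n => remTerm x n s) (fun n => by
    rw [remTerm, neg_add', neg_add', cpow_neg ((n : ℂ) + 1 + x), ← one_div, Nat.cast_add_one])
  have e1 : riemannZeta₁ (s + 1) = s * riemannZeta (s + 1) := by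
    rw [riemannZeta₁_eq, add_sub_cancel_right]
    rintro h; have := congrArg re h; simp at this; linarith
  have e2 : riemannZeta₁ (s + 2) = (s + 1) * riemannZeta (s + 2) := by
    rw [riemannZeta₁_eq]
    · ring
    · rintro h; have := congrArg re h; simp at this; linarith
  rw [h.tsum_eq, e1, e2]
  simp [cpow_neg]
  ring

/-- The continuation formula on a domain containing `-1`. -/
lemma hurwitz_sub_eq {x : ℝ} (hx : 0 < x) (hx1 : x < 1) :
    EqOn (fun s => HurwitzZeta.hurwitzZeta (x : UnitAddCircle) s - riemannZeta s)
      (fun s => (x : ℂ) ^ (-s) - x * riemannZeta₁ (s + 1) + s / 2 * x ^ 2 * riemannZeta₁ (s + 2)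
        + ∑' n, remTerm x n s) dom := by
  have hF : Differentiable ℂ
      fun s => HurwitzZeta.hurwitzZeta (x : UnitAddCircle) s - riemannZeta s := by
    simpa only [HurwitzZeta.hurwitzZeta_zero] using
      HurwitzZeta.differentiable_hurwitzZeta_sub_hurwitzZeta (x : UnitAddCircle) 0
  refine AnalyticOnNhd.eqOn_of_preconnected_of_eventuallyEq
    (hF.differentiableOn.analyticOnNhd isOpen_dom) (DifferentiableOn.analyticOnNhd ?_ isOpen_dom)
    isPreconnected_dom two_mem_dom ?_
  · refine DifferentiableOn.add (Differentiable.differentiableOn ?_)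
      (differentiableOn_tsum_remTerm hx hx1)
    have : Differentiable ℂ fun s : ℂ => (x : ℂ) ^ (-s) :=
      fun s => (hasDerivAt_cpow_neg hx s).differentiableAt
    fun_prop
  · filter_upwards [(isOpen_lt continuous_const continuous_re).mem_nhds
      (show (1 : ℝ) < (2 : ℂ).re by norm_num)] with s hs
    exact hurwitz_sub_eq_of_one_lt_re hx hx1 hs

lemma deriv_riemannZeta₁_zero :
    deriv riemannZeta₁ 0 = ((-1 / 2 + Real.log (2 * Real.pi) / 2 : ℝ) : ℂ) := by
  have h1 : riemannZeta₁ =ᶠ[𝓝 0] fun s => (s - 1) * riemannZeta s := by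
    filter_upwards [isOpen_compl_singleton.mem_nhds (show (0 : ℂ) ≠ 1 by norm_num)] with s hs
    exact riemannZeta₁_eq hs
  have h2 := ((hasDerivAt_id (0 : ℂ)).sub_const 1).mul
    (differentiableAt_riemannZeta (s := 0) (by norm_num)).hasDerivAt
  rw [h1.deriv_eq]
  refine h2.deriv.trans ?_
  rw [riemannZeta_zero, deriv_riemannZeta_zero]
  push_cast [Complex.ofReal_log (show 0 ≤ 2 * Real.pi by positivity)]
  simp
  ring

/-- The difference `ζ'(-1, x) - ζ'(-1)`, in the explicit form given by the continuation formula. -/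
noncomputable def zetaPart (x : ℝ) : ℝ :=
  -(x * Real.log x) - x * (-1 / 2 + Real.log (2 * Real.pi) / 2) + x ^ 2 / 2
    - x ^ 2 / 2 * Real.eulerMascheroniConstant + ∑' n, remDeriv n x

lemma hzeta'_neg_one {x : ℝ} (hx : 0 < x) (hx1 : x < 1) :
    hzeta' (-1) x = deriv riemannZeta (-1) + zetaPart x := by
  have hz := (differentiableAt_riemannZeta (s := -1) (by norm_num)).hasDerivAt
  have hh := (HurwitzZeta.differentiableAt_hurwitzZeta (x : UnitAddCircle) (s := -1)
    (by norm_num)).hasDerivAt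
  have h1 : HasDerivAt (fun s : ℂ => riemannZeta₁ (s + 1)) (deriv riemannZeta₁ 0) (-1) := by
    have := (differentiable_riemannZeta₁ (-1 + 1)).hasDerivAt.comp_add_const (-1) (1 : ℂ)
    simpa using this
  have h2 : HasDerivAt (fun s : ℂ => riemannZeta₁ (s + 2)) (deriv riemannZeta₁ 1) (-1) := by
    have := (differentiable_riemannZeta₁ (-1 + 2)).hasDerivAt.comp_add_const (-1) (2 : ℂ)
    convert! this using 2
    norm_num
  have hs := (((hasDerivAt_cpow_neg hx (-1)).sub (h1.const_mul (x : ℂ))).add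
    (((((hasDerivAt_id (-1 : ℂ)).div_const 2).mul_const ((x : ℂ) ^ 2))).mul h2)).add
    ((differentiableOn_tsum_remTerm hx hx1).differentiableAt
      (isOpen_dom.mem_nhds neg_one_mem_dom)).hasDerivAt
  have heq := (hurwitz_sub_eq hx hx1).eventuallyEq_of_mem (isOpen_dom.mem_nhds neg_one_mem_dom)
  have key := (hh.sub hz).unique (hs.congr_of_eventuallyEq heq)
  rw [← (hasSum_remDeriv hx hx1).tsum_eq, deriv_riemannZeta₁_zero, deriv_riemannZeta₁_one,
    sub_eq_iff_eq_add'] at key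
  rw [hzeta']
  refine key.trans ?_
  have e : (-1 + 2 : ℂ) = 1 := by norm_num
  rw [zetaPart]
  push_cast
  simp [e]
  ring

/-! ### The derivative in `x` and Weierstrass' formula for `log Γ` -/

lemma hasDerivAt_remDeriv (n : ℕ) {x : ℝ} (hx : 0 < x) :
    HasDerivAt (remDeriv n) (x / (n + 1) - Real.log (1 + x / (n + 1))) x := by
  have hk : (0 : ℝ) < n + 1 := by positivity
  have hkx : (0 : ℝ) < n + 1 + x := by positivity
  have h1 := (Real.hasDerivAt_mul_log hkx.ne').comp_const_add ((n : ℝ) + 1) x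
  have h2 := hasDerivAt_id x
  have h3 := h2.mul_const (Real.log (n + 1))
  have h4 := (h2.pow 2).div_const (2 * ((n : ℝ) + 1))
  have h := (((h1.neg.add_const ((n + 1) * Real.log (n + 1))).add h2).add h3).add h4
  convert! h using 1
  have : 1 + x / (n + 1) = (n + 1 + x) / (n + 1) := by field_simp
  rw [this, Real.log_div hkx.ne' hk.ne']
  simp
  field_simp
  ring

lemma abs_sub_log_le {y : ℝ} (hy : 0 ≤ y) : ‖y - Real.log (1 + y)‖ ≤ y ^ 2 := by
  have h1 := Real.log_le_sub_one_of_pos (show 0 < 1 + y by linarith)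
  have h2 := Real.one_sub_inv_le_log_of_pos (show 0 < 1 + y by linarith)
  have h3 : y - y ^ 2 ≤ 1 - (1 + y)⁻¹ := by
    have : 1 - (1 + y)⁻¹ - (y - y ^ 2) = y ^ 3 / (1 + y) := by field_simp; ring
    have : 0 ≤ y ^ 3 / (1 + y) := by positivity
    linarith
  rw [Real.norm_eq_abs, abs_le]
  constructor <;> nlinarith

lemma summable_one_div_sq : Summable fun n : ℕ => (1 / ((n : ℝ) + 1)) ^ 2 := by
  have := (summable_nat_add_iff 1).2 ((Real.summable_one_div_nat_pow (p := 2)).2 (by norm_num))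
  push_cast at this
  simpa [div_pow] using this

lemma norm_deriv_remDeriv_le (n : ℕ) {x : ℝ} (hx : 0 < x) (hx1 : x < 1) :
    ‖x / (n + 1) - Real.log (1 + x / (n + 1))‖ ≤ (1 / ((n : ℝ) + 1)) ^ 2 :=
  (abs_sub_log_le (by positivity)).trans (by gcongr)

/-- Weierstrass' product formula for `Γ`, in logarithmic form. -/
lemma tsum_eq_logGamma {x : ℝ} (hx : 0 < x) (hx1 : x < 1) :
    ∑' n : ℕ, (x / (n + 1) - Real.log (1 + x / (n + 1)))
      = Real.log (Real.Gamma x) + Real.log x + x * Real.eulerMascheroniConstant := by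
  have hsum : Summable fun n : ℕ => x / ((n : ℝ) + 1) - Real.log (1 + x / (n + 1)) :=
    .of_norm_bounded summable_one_div_sq fun n => norm_deriv_remDeriv_le n hx hx1
  refine tendsto_nhds_unique hsum.hasSum.tendsto_sum_nat ?_
  have h1 := Real.BohrMollerup.tendsto_log_gamma hx
  have h2 := Real.tendsto_harmonic_sub_log
  refine ((h1.add_const (Real.log x)).add (h2.const_mul x)).congr fun n => ?_
  rw [Real.BohrMollerup.logGammaSeq, Finset.sum_range_succ', harmonic]
  have h3 : Real.log (n.factorial : ℝ) = ∑ m ∈ Finset.range n, Real.log ((m : ℝ) + 1) := by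
    rw [← Finset.prod_range_add_one_eq_factorial, Nat.cast_prod, Real.log_prod]
    · simp
    · intro i _; positivity
  have h4 : ∀ m : ℕ, Real.log (1 + x / ((m : ℝ) + 1))
      = Real.log (x + ((m + 1 : ℕ) : ℝ)) - Real.log ((m : ℝ) + 1) := fun m => by
    rw [← Real.log_div (by positivity) (by positivity)]
    congr 1; push_cast; field_simp; ring
  simp only [h4, Finset.sum_sub_distrib, h3]
  push_cast
  rw [mul_sub, Finset.mul_sum]
  simp only [div_eq_mul_inv]
  simp
  ring

lemma hasDerivAt_zetaPart {x : ℝ} (hx : 0 < x) (hx1 : x < 1) :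
    HasDerivAt zetaPart
      (Real.log (Real.Gamma x) + x - 1 / 2 - Real.log (2 * Real.pi) / 2) x := by
  have hs : Summable fun n => remDeriv n x := by
    have := (hasSum_remDeriv hx hx1).summable
    exact_mod_cast this
  have h1 := hasDerivAt_tsum_of_isPreconnected summable_one_div_sq isOpen_Ioo
    isPreconnected_Ioo (fun n y (hy : y ∈ Ioo (0 : ℝ) 1) => hasDerivAt_remDeriv n hy.1)
    (fun n y hy => norm_deriv_remDeriv_le n hy.1 hy.2) ⟨hx, hx1⟩ hs ⟨hx, hx1⟩
  rw [tsum_eq_logGamma hx hx1] at h1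
  have h2 := hasDerivAt_id x
  have h3 := (h2.pow 2).div_const 2
  have h := ((((Real.hasDerivAt_mul_log hx.ne').neg.sub
    (h2.mul_const (-1 / 2 + Real.log (2 * Real.pi) / 2))).add h3).sub
    (h3.mul_const Real.eulerMascheroniConstant)).add h1
  convert! h using 1
  simp
  ring

end HurwitzLogGamma

/-- For reals `0 < a`, `0 ≤ t < a`, `a + t < 1`,
`∫_0^t log Γ(a+s) ds = -t²/2 + (log √(2π) - a + 1/2) t + ζ'(-1, a+t) - ζ'(-1, a)`. -/
theorem integral_logGamma (a t : ℝ) (ha : 0 < a) (ht0 : 0 ≤ t) (hta : t < a)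
    (hat : a + t < 1) :
    ((∫ s in (0 : ℝ)..t, Real.log (Real.Gamma (a + s))) : ℂ)
      = -(t : ℂ) ^ 2 / 2
        + ((Real.log (Real.sqrt (2 * Real.pi)) : ℂ) - (a : ℂ) + 1 / 2) * (t : ℂ)
        + hzeta' (-1) (a + t) - hzeta' (-1) a := by
  -- An antiderivative of `s ↦ log Γ(a + s)` on `[0, t]`.
  have hder : ∀ s ∈ Set.uIcc 0 t, HasDerivAt
      (fun s => HurwitzLogGamma.zetaPart (a + s) - (a + s) ^ 2 / 2
        + (1 / 2 + Real.log (2 * Real.pi) / 2) * s)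
      (Real.log (Real.Gamma (a + s))) s := by
    intro s hs
    rw [Set.uIcc_of_le ht0] at hs
    have hpos : 0 < a + s := by linarith [hs.1]
    have h1 := (HurwitzLogGamma.hasDerivAt_zetaPart hpos (by linarith [hs.2])).comp_const_add a s
    have h2 := (((hasDerivAt_id s).const_add a).pow 2).div_const 2
    have h := (h1.sub h2).add
      ((hasDerivAt_id s).const_mul (1 / 2 + Real.log (2 * Real.pi) / 2))
    convert! h using 1
    simp
    ring
  have hint : IntervalIntegrable (fun s => Real.log (Real.Gamma (a + s)))
      MeasureTheory.volume 0 t := by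
    refine ContinuousOn.intervalIntegrable fun s hs => ContinuousAt.continuousWithinAt ?_
    rw [Set.uIcc_of_le ht0] at hs
    have hpos : 0 < a + s := by linarith [hs.1]
    have hG : ContinuousAt Real.Gamma (a + s) :=
      (Real.differentiableAt_Gamma fun m => by
        have : (0 : ℝ) ≤ m := m.cast_nonneg
        linarith).continuousAt
    exact (hG.comp (f := fun s => a + s) (by fun_prop)).log (Real.Gamma_pos_of_pos hpos).ne'
  have hreal := intervalIntegral.integral_eq_sub_of_hasDerivAt hder hint
  rw [intervalIntegral.integral_ofReal, hreal,
    HurwitzLogGamma.hzeta'_neg_one (by linarith) hat,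
    HurwitzLogGamma.hzeta'_neg_one ha (by linarith), Real.log_sqrt (by positivity)]
  push_cast
  simp
  ring
end
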